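/- Let X be an n×n real symmetric matrix and let Q be an n×l real matrix with orthonormal columns (QᵀQ = I_l). Then the symmetric rank-constrained approximation Q(QᵀXQ)Qᵀ satisfies ‖X − Q QᵀX Q Qᵀ‖_F ≤ 2 · ‖X − Q QᵀX‖_F. -/

import Mathlib

/-!
Put `P = Q Qᵀ`, an orthogonal projection, and `E = X - P X`, so that `P E = 0`. As `X` is symmetric,
`X - P X P = E + P Eᵀ`, and `Eᵀ (P Eᵀ) = (P E)ᵀ Eᵀ = 0` makes the two summands orthogonal for the
Frobenius inner product. Splitting `Eᵀ = P Eᵀ + (Eᵀ - P Eᵀ)` orthogonally gives `‖P Eᵀ‖ ≤ ‖E‖`.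
Hence `‖X - P X P‖² ≤ 2 ‖E‖²`, so the bound holds even with `√2` in place of `2`.
-/

open Matrix

/-- Frobenius norm of a real matrix: `√(Σᵢⱼ Xᵢⱼ²)`. -/
noncomputable def frobNorm {m n : ℕ} (X : Matrix (Fin m) (Fin n) ℝ) : ℝ :=
  Real.sqrt (∑ i, ∑ j, X i j ^ 2)

lemma frobNorm_nonneg {m n : ℕ} (A : Matrix (Fin m) (Fin n) ℝ) : 0 ≤ frobNorm A :=
  Real.sqrt_nonneg _

lemma frobNorm_sq {m n : ℕ} (A : Matrix (Fin m) (Fin n) ℝ) :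
    frobNorm A ^ 2 = (Aᵀ * A).trace := by
  rw [frobNorm, Real.sq_sqrt (by positivity), Finset.sum_comm]
  simp [Matrix.trace, Matrix.mul_apply, sq]

lemma frobNorm_transpose {m n : ℕ} (A : Matrix (Fin m) (Fin n) ℝ) :
    frobNorm Aᵀ = frobNorm A := by
  rw [frobNorm, frobNorm, Finset.sum_comm]
  rfl

/-- Pythagoras for matrices with mutually orthogonal column spaces. -/
lemma frobNorm_add_sq {m n : ℕ} (A B : Matrix (Fin m) (Fin n) ℝ) (h : Aᵀ * B = 0) :
    frobNorm (A + B) ^ 2 = frobNorm A ^ 2 + frobNorm B ^ 2 := by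
  have h' : Bᵀ * A = 0 := by simpa using congrArg transpose h
  simp only [frobNorm_sq, transpose_add, Matrix.add_mul, Matrix.mul_add, h, h', trace_add,
    trace_zero]
  ring

/-- An orthogonal projection does not increase the Frobenius norm. -/
lemma frobNorm_proj_mul_sq_le {m n : ℕ} (P : Matrix (Fin m) (Fin m) ℝ) (hs : Pᵀ = P)
    (hp : P * P = P) (A : Matrix (Fin m) (Fin n) ℝ) :
    frobNorm (P * A) ^ 2 ≤ frobNorm A ^ 2 := by
  have h : (P * A)ᵀ * (A - P * A) = 0 := by
    rw [transpose_mul, hs, Matrix.mul_assoc, Matrix.mul_sub, ← Matrix.mul_assoc P P, hp, sub_self,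
      Matrix.mul_zero]
  have := frobNorm_add_sq _ _ h
  rw [add_sub_cancel] at this
  nlinarith [sq_nonneg (frobNorm (A - P * A))]

/-- for symmetric `X` and `Q` with orthonormal columns,
`‖X − Q QᵀX Q Qᵀ‖_F ≤ 2 ‖X − Q QᵀX‖_F`. -/
theorem symmetric_projection_approximation_bound {n l : ℕ}
    (X : Matrix (Fin n) (Fin n) ℝ) (hX : X.IsSymm)
    (Q : Matrix (Fin n) (Fin l) ℝ) (hQ : Qᵀ * Q = 1) :
    frobNorm (X - Q * (Qᵀ * X * Q) * Qᵀ) ≤ 2 * frobNorm (X - Q * (Qᵀ * X)) := by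
  obtain ⟨P, hP⟩ : ∃ P, P = Q * Qᵀ := ⟨_, rfl⟩
  have hs : Pᵀ = P := by simp [hP]
  have hp : P * P = P := by
    rw [hP, Matrix.mul_assoc, ← Matrix.mul_assoc Qᵀ, hQ, Matrix.one_mul]
  obtain ⟨E, hE⟩ : ∃ E, E = X - P * X := ⟨_, rfl⟩
  have hPE : P * E = 0 := by rw [hE, Matrix.mul_sub, ← Matrix.mul_assoc, hp, sub_self]
  have h1 : X - Q * (Qᵀ * X) = E := by rw [hE, hP, Matrix.mul_assoc]
  have h2 : X - Q * (Qᵀ * X * Q) * Qᵀ = E + P * Eᵀ := by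
    rw [hE, transpose_sub, transpose_mul, hs, hX.eq, Matrix.mul_sub, sub_add_sub_cancel, hP]
    simp only [Matrix.mul_assoc]
  have h3 : Eᵀ * (P * Eᵀ) = 0 := by
    have : Eᵀ * P = 0 := by simpa [hs] using congrArg transpose hPE
    rw [← Matrix.mul_assoc, this, Matrix.zero_mul]
  rw [h1, h2]
  have h4 := frobNorm_add_sq _ _ h3
  have h5 := frobNorm_proj_mul_sq_le P hs hp Eᵀ
  rw [frobNorm_transpose] at h5
  have h6 := frobNorm_nonneg E
  refine abs_le_of_sq_le_sq' ?_ (by positivity) |>.2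
  nlinarith [sq_nonneg (frobNorm E)]
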